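/- arXiv:1607.08720 — 2 statements merged into one kernel-verified Lean document; each statement's English description precedes it below -/
import Mathlib

section
/- Let W be an m × k real matrix with nonnegative entries, H a k × n real matrix with nonnegative entries, 𝟙 the 1 × k all-ones row vector, c1, c2, c3 ≥ 0, θ ∈ ℝⁿ, β ∈ ℝᵏ, and fix indices i ∈ {1,…,k}, j ∈ {1,…,n}; write h = H_{ij}. Then (WᵀWH)_{ij} + c1(𝟙ᵀ𝟙H)_{ij} + 6 c2 h³ + c2 h + (1/2) c3 max(0, −(θ_j − β_i)) ≥ h · [ (WᵀW)_{ii} + c1(𝟙ᵀ𝟙)_{ii} + 6 c2 h² − 6 c2 h + c2 ]. -/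
open Matrix

theorem gram_aux {p k n : ℕ} (W : Matrix (Fin p) (Fin k) ℝ) (H : Matrix (Fin k) (Fin n) ℝ)
    (hW : ∀ a b, 0 ≤ W a b) (hH : ∀ a b, 0 ≤ H a b) (i : Fin k) (j : Fin n) :
    (Wᵀ * W) i i * H i j ≤ (Wᵀ * W * H) i j := by
  rw [Matrix.mul_apply (M := Wᵀ * W) (N := H)]
  refine Finset.single_le_sum (f := fun l => (Wᵀ * W) i l * H l j) (fun l _ => ?_)
    (Finset.mem_univ i)
  refine mul_nonneg ?_ (hH l j)
  rw [Matrix.mul_apply]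
  exact Finset.sum_nonneg fun a _ => mul_nonneg (hW a i) (hW a l)

/-- Key inequality `φ_{ij} h ≥ (1/2) F''(h) · h` in the auxiliary-function proof
for the `H`-update of TopicResponse. -/
theorem topicresponse_phi_inequality
    (m k n : ℕ)
    (W : Matrix (Fin m) (Fin k) ℝ) (H : Matrix (Fin k) (Fin n) ℝ)
    (hW : ∀ a b, 0 ≤ W a b) (hH : ∀ a b, 0 ≤ H a b)
    (c1 c2 c3 : ℝ) (hc1 : 0 ≤ c1) (hc2 : 0 ≤ c2) (hc3 : 0 ≤ c3)
    (θ : Fin n → ℝ) (β : Fin k → ℝ) (i : Fin k) (j : Fin n) :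
    let ones : Matrix (Fin 1) (Fin k) ℝ := Matrix.of fun _ _ => 1
    let h : ℝ := H i j
    (Wᵀ * W * H) i j + c1 * (onesᵀ * ones * H) i j + 6 * c2 * h ^ 3 + c2 * h
        + (1 / 2) * c3 * max 0 (-(θ j - β i))
      ≥ h * ((Wᵀ * W) i i + c1 * (onesᵀ * ones) i i
        + 6 * c2 * h ^ 2 - 6 * c2 * h + c2) := by
  intro ones h
  have h1 := gram_aux W H hW hH i j
  have h2 := mul_le_mul_of_nonneg_left
    (gram_aux ones H (fun _ _ => zero_le_one) hH i j) hc1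
  have h3 : 0 ≤ (1 / 2) * c3 * max 0 (-(θ j - β i)) :=
    mul_nonneg (by positivity) (le_max_left _ _)
  have h4 : 0 ≤ c2 * h ^ 2 := by positivity
  change (Wᵀ * W) i i * h ≤ _ at h1
  change c1 * ((onesᵀ * ones) i i * h) ≤ _ at h2
  linarith
end

section
/- Let V ∈ ℝ^{m×n} and H ∈ ℝ^{k×n} have nonnegative entries, let λ ≥ 0, and let W ∈ ℝ^{m×k} have nonnegative entries such that (WHHᵀ + λW)_{ab} > 0 for all (a,b). Define the multiplicative update W'_{ab} = W_{ab} · (VHᵀ)_{ab} / (WHHᵀ + λW)_{ab}. Then the regularised NMF objective is non-increasing: ‖V − W'H‖ + λ‖W'‖ ≤ ‖V − WH‖ + λ‖W‖. -/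
open Matrix

/-- Squared Frobenius norm. -/
noncomputable def sqFrob {a b : ℕ} (A : Matrix (Fin a) (Fin b) ℝ) : ℝ :=
  ∑ i, ∑ j, (A i j) ^ 2

theorem nmf_row_aux (n k : ℕ) (v : Fin n → ℝ) (H : Fin k → Fin n → ℝ) (w s d : Fin k → ℝ)
    (lam : ℝ) (hH : ∀ i j, 0 ≤ H i j) (hw : ∀ b, 0 ≤ w b)
    (hd : ∀ b, d b = ∑ j, (∑ c, w c * H c j) * H b j + lam * w b)
    (hd0 : ∀ b, 0 < d b)
    (hs : ∀ b, s b * d b = ∑ j, v j * H b j - d b) :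
    ∑ j, (v j - ∑ b, (w b + w b * s b) * H b j) ^ 2 + lam * ∑ b, (w b + w b * s b) ^ 2
      ≤ ∑ j, (v j - ∑ b, w b * H b j) ^ 2 + lam * ∑ b, (w b) ^ 2 := by
  have hcs : ∀ j, (∑ b, w b * s b * H b j) ^ 2
      ≤ (∑ b, w b * H b j) * ∑ b, w b * H b j * s b ^ 2 := by
    intro j
    apply Finset.sum_sq_le_sum_mul_sum_of_sq_eq_mul
    · intro b _
      exact mul_nonneg (hw b) (hH b j)
    · intro b _
      exact mul_nonneg (mul_nonneg (hw b) (hH b j)) (sq_nonneg _)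
    · intro b _
      ring
  have h1 : ∑ j, (∑ b, w b * s b * H b j) ^ 2
      ≤ ∑ b, w b * s b ^ 2 * (∑ j, (∑ c, w c * H c j) * H b j) := by
    refine (Finset.sum_le_sum fun j _ => hcs j).trans (le_of_eq ?_)
    simp_rw [Finset.mul_sum (s := (Finset.univ : Finset (Fin k)))]
    rw [Finset.sum_comm]
    refine Finset.sum_congr rfl fun b _ => ?_
    rw [Finset.mul_sum]
    refine Finset.sum_congr rfl fun j _ => ?_
    ring
  have h2 : ∑ j, (v j - ∑ b, (w b + w b * s b) * H b j) ^ 2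
      = ∑ j, (v j - ∑ b, w b * H b j) ^ 2
        - 2 * ∑ b, w b * s b * ∑ j, (v j - ∑ c, w c * H c j) * H b j
        + ∑ j, (∑ b, w b * s b * H b j) ^ 2 := by
    have e : ∑ b, w b * s b * ∑ j, (v j - ∑ c, w c * H c j) * H b j
        = ∑ j, (v j - ∑ c, w c * H c j) * ∑ b, w b * s b * H b j := by
      simp_rw [Finset.mul_sum (s := (Finset.univ : Finset (Fin n)))]
      rw [Finset.sum_comm]
      refine Finset.sum_congr rfl fun j _ => ?_
      rw [Finset.mul_sum]
      refine Finset.sum_congr rfl fun b _ => ?_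
      ring
    rw [e, Finset.mul_sum, ← Finset.sum_sub_distrib, ← Finset.sum_add_distrib]
    refine Finset.sum_congr rfl fun j _ => ?_
    simp_rw [add_mul]
    rw [Finset.sum_add_distrib]
    ring
  have h3 : ∀ b, ∑ j, (v j - ∑ c, w c * H c j) * H b j = s b * d b + lam * w b := by
    intro b
    simp_rw [sub_mul]
    rw [Finset.sum_sub_distrib]
    linarith [hs b, hd b]
  have h4 : 0 ≤ ∑ b, w b * s b ^ 2 * d b :=
    Finset.sum_nonneg fun b _ => mul_nonneg (mul_nonneg (hw b) (sq_nonneg _)) (hd0 b).le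
  have h5 : lam * ∑ b, (w b + w b * s b) ^ 2
      - 2 * ∑ b, w b * s b * (s b * d b + lam * w b)
      + ∑ b, w b * s b ^ 2 * (∑ j, (∑ c, w c * H c j) * H b j)
      = lam * ∑ b, (w b) ^ 2 - ∑ b, w b * s b ^ 2 * d b := by
    simp only [Finset.mul_sum (s := (Finset.univ : Finset (Fin k))) (a := lam),
      Finset.mul_sum (s := (Finset.univ : Finset (Fin k))) (a := (2 : ℝ))]
    rw [← Finset.sum_sub_distrib, ← Finset.sum_add_distrib, ← Finset.sum_sub_distrib]
    refine Finset.sum_congr rfl fun b _ => ?_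
    rw [show ∑ j, (∑ c, w c * H c j) * H b j = d b - lam * w b by linarith [hd b]]
    ring
  simp_rw [h3] at h2
  linarith

/-- The multiplicative update `W'_{ab} = W_{ab}·(VHᵀ)_{ab}/(WHHᵀ + λW)_{ab}` does not
increase the regularised NMF objective `‖V − WH‖ + λ‖W‖` (squared Frobenius norms). -/
theorem nmf_W_update_nonincreasing
    (m n k : ℕ) (V : Matrix (Fin m) (Fin n) ℝ) (H : Matrix (Fin k) (Fin n) ℝ)
    (W : Matrix (Fin m) (Fin k) ℝ) (lam : ℝ)
    (hV : ∀ i j, 0 ≤ V i j) (hH : ∀ i j, 0 ≤ H i j) (hW : ∀ i j, 0 ≤ W i j)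
    (hlam : 0 ≤ lam)
    (hden : ∀ a b, 0 < (W * H * Hᵀ + lam • W) a b) :
    let W' : Matrix (Fin m) (Fin k) ℝ :=
      Matrix.of fun a b => W a b * (V * Hᵀ) a b / (W * H * Hᵀ + lam • W) a b
    sqFrob (V - W' * H) + lam * sqFrob W'
      ≤ sqFrob (V - W * H) + lam * sqFrob W := by
  intro W'
  unfold sqFrob
  rw [Finset.mul_sum, Finset.mul_sum, ← Finset.sum_add_distrib, ← Finset.sum_add_distrib]
  refine Finset.sum_le_sum fun i _ => ?_
  have key := nmf_row_aux n k (V i) H (W i)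
    (fun b => (V * Hᵀ) i b / (W * H * Hᵀ + lam • W) i b - 1)
    (fun b => (W * H * Hᵀ + lam • W) i b) lam hH (hW i)
    (fun b => by simp [Matrix.mul_apply]) (hden i)
    (fun b => by
      have h := (hden i b).ne'
      have h2 : (V * Hᵀ) i b = ∑ j, V i j * H b j := by simp [Matrix.mul_apply]
      rw [← h2]
      field_simp)
  have hW' : ∀ b, W' i b
      = W i b + W i b * ((V * Hᵀ) i b / (W * H * Hᵀ + lam • W) i b - 1) := by
    intro b
    simp only [W', Matrix.of_apply]
    ring
  simp only [Matrix.sub_apply, Matrix.mul_apply (M := W'), Matrix.mul_apply (M := W) (N := H), hW']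
  exact key
end
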